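/- arXiv:0807.1491 — 2 statements merged into one kernel-verified Lean document; each statement's English description precedes it below -/
import Mathlib

section
/- The traces of the matrices representing the conjugacy-class representatives of the binary icosahedral group under σ₁ are as follows: tr(I) = 2, tr(A₁) = −e₅ − e₅⁴, tr(A₁²) = e₅² + e₅³, tr(A₁³) = −e₅² − e₅³, tr(A₁⁴) = e₅ + e₅⁴, tr(A₁⁵) = −2, tr(A₁B₁) = 0, tr(B₁) = 1, and tr(B₁²) = −1. -/
noncomputable section

/-- `e₅ = exp(2πi/5)`. -/
def e5 : ℂ := Complex.exp (2 * Real.pi * Complex.I / 5)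

/-- The matrix `A₁`, image of the generator `r` under the representation `σ₁`. -/
def A1 : Matrix (Fin 2) (Fin 2) ℂ :=
  (1/5 : ℂ) • !![-3*e5 - e5^2 + e5^3 - 2*e5^4, e5 - 3*e5^2 - 2*e5^3 - e5^4;
                 e5 + 2*e5^2 + 3*e5^3 - e5^4, -2*e5 + e5^2 - e5^3 - 3*e5^4]

/-- The matrix `B₁`, image of the generator `s` under the representation `σ₁`. -/
def B1 : Matrix (Fin 2) (Fin 2) ℂ :=
  (1/5 : ℂ) • !![-e5 - 2*e5^2 - 3*e5^3 - 4*e5^4, 2*e5 - e5^2 + e5^3 - 2*e5^4;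
                 2*e5 - e5^2 + e5^3 - 2*e5^4, -4*e5 - 3*e5^2 - 2*e5^3 - e5^4]

theorem e5_sum : e5^4 + e5^3 + e5^2 + e5 + 1 = 0 := by
  have hp : IsPrimitiveRoot e5 5 := by
    have := Complex.isPrimitiveRoot_exp 5 (by norm_num)
    simpa [e5] using this
  have := hp.geom_sum_eq_zero (by norm_num)
  simp only [Finset.sum_range_succ, Finset.sum_range_zero] at this
  linear_combination this

theorem tr_sq (M : Matrix (Fin 2) (Fin 2) ℂ) :
    Matrix.trace (M ^ 2) = M.trace ^ 2 - 2 * M.det := by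
  simp [pow_two, Matrix.trace_fin_two, Matrix.det_fin_two, Matrix.mul_apply, Fin.sum_univ_two]
  ring

theorem tr_step (M : Matrix (Fin 2) (Fin 2) ℂ) (n : ℕ) :
    Matrix.trace (M ^ (n + 2)) = M.trace * Matrix.trace (M ^ (n + 1)) - M.det * Matrix.trace (M ^ n) := by
  rw [pow_succ M (n + 1), pow_succ M n]
  generalize M ^ n = N
  simp [Matrix.trace_fin_two, Matrix.det_fin_two, Matrix.mul_apply, Fin.sum_univ_two]
  ring

theorem tr_A1 : Matrix.trace A1 = -e5 - e5^4 := by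
  simp [A1, Matrix.trace_fin_two]
  ring

theorem tr_B1 : Matrix.trace B1 = 1 := by
  have h := e5_sum
  simp [B1, Matrix.trace_fin_two]
  linear_combination -h

theorem e5_four : e5^4 = -e5^3 - e5^2 - e5 - 1 := by linear_combination e5_sum

theorem det_A1 : A1.det = 1 := by
  have h := e5_four
  simp [A1, Matrix.det_fin_two]
  grind

theorem det_B1 : B1.det = 1 := by
  have h := e5_four
  simp [B1, Matrix.det_fin_two]
  grind

/-- The values of the character `χ₁` of `σ₁` on the conjugacy-class
representatives `1, r, r², r³, r⁴, r⁵, rs, s, s²` of the binary icosahedral group. -/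
theorem sigma1_character_values :
    Matrix.trace (1 : Matrix (Fin 2) (Fin 2) ℂ) = 2 ∧
    Matrix.trace A1 = -e5 - e5^4 ∧
    Matrix.trace (A1 ^ 2) = e5^2 + e5^3 ∧
    Matrix.trace (A1 ^ 3) = -e5^2 - e5^3 ∧
    Matrix.trace (A1 ^ 4) = e5 + e5^4 ∧
    Matrix.trace (A1 ^ 5) = -2 ∧
    Matrix.trace (A1 * B1) = 0 ∧
    Matrix.trace B1 = 1 ∧
    Matrix.trace (B1 ^ 2) = -1 := by
  have h := e5_four
  have h2 := tr_sq A1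
  have h3 := tr_step A1 1
  have h4 := tr_step A1 2
  have h5 := tr_step A1 3
  have hb := tr_sq B1
  simp only [Nat.reduceAdd, pow_one, tr_A1, det_A1, tr_B1, det_B1] at h2 h3 h4 h5 hb
  have k2 : Matrix.trace (A1 ^ 2) = e5^2 + e5^3 := by rw [h2]; grind
  have k3 : Matrix.trace (A1 ^ 3) = -e5^2 - e5^3 := by rw [h3, k2]; grind
  have k4 : Matrix.trace (A1 ^ 4) = e5 + e5^4 := by rw [h4, k3, k2]; grind
  have k5 : Matrix.trace (A1 ^ 5) = -2 := by rw [h5, k4, k3]; grind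
  refine ⟨by simp, tr_A1, k2, k3, k4, k5, ?_, tr_B1, by rw [hb]; norm_num⟩
  simp [A1, B1, Matrix.trace_fin_two, Matrix.mul_apply, Fin.sum_univ_two]
  grind

end
end

section
/- For each of the three pairs of 2×2 complex matrices (A, B) ∈ {(I, I), (A₁, B₁), (A₂, B₂)}, the following six trace identities hold: tr(B²) = 3·tr(B) − 4; tr(AB) = 2·tr(B) − 2; tr(A⁵) = 4·tr(B) − 6; tr(A⁴) = 4·tr(B) − tr(A) − 4; tr(A³) = 3·tr(B) − tr(A) − 2; and tr(A²) = tr(B) + tr(A) − 2. (These express the relations τ_{s²} = 3τ_s − 2τ_1, τ_{rs} = 2τ_s − τ_1, τ_{r⁵} = 4τ_s − 3τ_1, τ_{r⁴} = 4τ_s − τ_r − 2τ_1, τ_{r³} = 3τ_s − τ_r − τ_1, and τ_{r²} = τ_s + τ_r − τ_1 in the coordinate ring of the SL(2,ℂ) character variety of the binary icosahedral group, verified on all three of its characters.) -/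
noncomputable section

/-- The matrix `A₂`, image of the generator `r` under the representation `σ₂`. -/
def A2 : Matrix (Fin 2) (Fin 2) ℂ :=
  !![e5 - e5^2, -e5^2 - e5^4;
     -e5 - e5^4, -e5 - e5^3]

/-- The matrix `B₂`, image of the generator `s` under the representation `σ₂`. -/
def B2 : Matrix (Fin 2) (Fin 2) ℂ :=
  !![1, -e5^3;
     e5^2, 0]

theorem e5_rel : e5^4 = -1 - e5 - e5^2 - e5^3 := by
  have h5 : e5^5 = 1 := by
    rw [e5, ← Complex.exp_nat_mul, ← Complex.exp_two_pi_mul_I]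
    congr 1
    push_cast
    ring
  have hp : IsPrimitiveRoot e5 5 := by
    have := Complex.isPrimitiveRoot_exp 5 (by norm_num)
    simpa [e5] using this
  have h1 : e5 - 1 ≠ 0 := sub_ne_zero.mpr (hp.ne_one (by norm_num))
  apply mul_left_cancel₀ h1
  linear_combination h5

theorem trace_aux (A B : Matrix (Fin 2) (Fin 2) ℂ) (hA : A 0 0 * A 1 1 - A 0 1 * A 1 0 = 1)
    (hB : B 0 0 * B 1 1 - B 0 1 * B 1 0 = 1) (hb : B 0 0 + B 1 1 = 1)
    (ht : (A 0 0 + A 1 1)^2 = A 0 0 + A 1 1 + 1)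
    (hab : A 0 0 * B 0 0 + A 0 1 * B 1 0 + (A 1 0 * B 0 1 + A 1 1 * B 1 1) = 0) :
      Matrix.trace (B ^ 2) = 3 * Matrix.trace B - 4 ∧
      Matrix.trace (A * B) = 2 * Matrix.trace B - 2 ∧
      Matrix.trace (A ^ 5) = 4 * Matrix.trace B - 6 ∧
      Matrix.trace (A ^ 4) = 4 * Matrix.trace B - Matrix.trace A - 4 ∧
      Matrix.trace (A ^ 3) = 3 * Matrix.trace B - Matrix.trace A - 2 ∧
      Matrix.trace (A ^ 2) = Matrix.trace B + Matrix.trace A - 2 := by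
  have htB : B.trace = 1 := by rw [Matrix.trace_fin_two, hb]
  have ht' : A.trace ^ 2 = A.trace + 1 := by rw [Matrix.trace_fin_two, ht]
  have h2 (M : Matrix (Fin 2) (Fin 2) ℂ) (hM : M 0 0 * M 1 1 - M 0 1 * M 1 0 = 1) :
      M ^ 2 = M.trace • M - 1 := by
    ext i j
    fin_cases i <;> fin_cases j <;>
      simp [pow_two, Matrix.mul_apply, Matrix.trace_fin_two, Fin.sum_univ_two] <;>
      first
        | ring1
        | linear_combination -hM
  have hs (n : ℕ) : (A ^ (n+2)).trace = A.trace * (A ^ (n+1)).trace - (A ^ n).trace := by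
    rw [pow_add, h2 A hA, mul_sub, Matrix.mul_smul, ← pow_succ, mul_one, Matrix.trace_sub,
      Matrix.trace_smul, smul_eq_mul]
  have t0 : (A ^ 0).trace = 2 := by simp
  have t1 : (A ^ 1).trace = A.trace := by simp
  have t2 := hs 0
  have t3 := hs 1
  have t4 := hs 2
  have t5 := hs 3
  norm_num only [zero_add] at t2 t3 t4 t5 t0 t1
  have hBB : (B ^ 2).trace = -1 := by
    rw [h2 B hB, Matrix.trace_sub, Matrix.trace_smul, htB]
    simp
    norm_num
  have hAB : (A * B).trace = 0 := by
    rw [Matrix.trace_fin_two, Matrix.mul_apply, Matrix.mul_apply, Fin.sum_univ_two,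
      Fin.sum_univ_two, hab]
  rw [hBB, hAB, htB]
  generalize A.trace = t at *
  have s2 : (A ^ 2).trace = t - 1 := by
    rw [t2, t1, t0]; linear_combination ht'
  have s3 : (A ^ 3).trace = 1 - t := by
    rw [t3, s2, t1]; linear_combination ht'
  have s4 : (A ^ 4).trace = -t := by
    rw [t4, s3, s2]; linear_combination -ht'
  have s5 : (A ^ 5).trace = -2 := by
    rw [t5, s4, s3]; linear_combination -ht'
  rw [s2, s3, s4, s5]
  refine ⟨?_, ?_, ?_, ?_, ?_, ?_⟩ <;> ring

/-- For each of the three pairs `(A, B) ∈ {(I, I), (A₁, B₁), (A₂, B₂)}`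
(the images of the generators `r, s` under the three `SL(2,ℂ)` representations
`σ₀, σ₁, σ₂` of the binary icosahedral group), the six trace identities
`τ_{s²} = 3τ_s − 2τ_1`, `τ_{rs} = 2τ_s − τ_1`, `τ_{r⁵} = 4τ_s − 3τ_1`,
`τ_{r⁴} = 4τ_s − τ_r − 2τ_1`, `τ_{r³} = 3τ_s − τ_r − τ_1`, and
`τ_{r²} = τ_s + τ_r − τ_1` hold (with `τ_1 = tr I = 2`). -/
theorem character_variety_relations :
    ∀ A B : Matrix (Fin 2) (Fin 2) ℂ,
      ((A = 1 ∧ B = 1) ∨ (A = A1 ∧ B = B1) ∨ (A = A2 ∧ B = B2)) →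
      Matrix.trace (B ^ 2) = 3 * Matrix.trace B - 4 ∧
      Matrix.trace (A * B) = 2 * Matrix.trace B - 2 ∧
      Matrix.trace (A ^ 5) = 4 * Matrix.trace B - 6 ∧
      Matrix.trace (A ^ 4) = 4 * Matrix.trace B - Matrix.trace A - 4 ∧
      Matrix.trace (A ^ 3) = 3 * Matrix.trace B - Matrix.trace A - 2 ∧
      Matrix.trace (A ^ 2) = Matrix.trace B + Matrix.trace A - 2 := by
  rintro A B (⟨rfl, rfl⟩ | ⟨rfl, rfl⟩ | ⟨rfl, rfl⟩)
  · simp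
    norm_num
  · have h := e5_rel
    apply trace_aux <;> simp [A1, B1] <;> grind
  · have h := e5_rel
    apply trace_aux <;> simp [A2, B2] <;> grind

end
end
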